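/- arXiv:2508.06285 — 11 statements merged into one kernel-verified Lean document; each statement's English description precedes it below -/
import Mathlib

section
/- For any (possibly degenerate) triangle with side lengths a, b, c and area S, the Finsler–Hadwiger inequality holds: a² + b² + c² ≥ (a−b)² + (b−c)² + (c−a)² + 4√3·S. -/
/-!
In the Ravi variables `x = -a + b + c`, `y = a - b + c`, `z = a + b - c`, the inequality reads
`xy + yz + zx ≥ 4 √3 S`, while Heron's formula reads `16 S² = xyz (x + y + z)`. Squaring therefore
reduces it to `3 xyz (x + y + z) ≤ (xy + yz + zx)²`, which is `3 (uv + vw + wu) ≤ (u + v + w)²` at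
`u = xy`, `v = yz`, `w = zx`.
-/

section OrderedRing

variable {R : Type*} [CommRing R] [LinearOrder R] [IsStrictOrderedRing R]

theorem three_mul_sum_mul_le_sq_sum (u v w : R) :
    3 * (u * v + v * w + w * u) ≤ (u + v + w) ^ 2 := by
  linarith [sq_nonneg (u - v), sq_nonneg (v - w), sq_nonneg (w - u)]

theorem three_mul_prod_mul_sum_le_sq_sum_mul (x y z : R) :
    3 * (x * y * z * (x + y + z)) ≤ (x * y + y * z + z * x) ^ 2 :=
  calc
    3 * (x * y * z * (x + y + z))
        = 3 * (x * y * (y * z) + y * z * (z * x) + z * x * (x * y)) := by ring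
    _ ≤ (x * y + y * z + z * x) ^ 2 := three_mul_sum_mul_le_sq_sum ..

end OrderedRing

theorem sqrt_three_mul_sqrt_prod_mul_sum_le {x y z : ℝ} (h : 0 ≤ x * y + y * z + z * x) :
    √3 * √(x * y * z * (x + y + z)) ≤ x * y + y * z + z * x := by
  rw [← Real.sqrt_mul (by norm_num)]
  exact Real.sqrt_le_iff.mpr ⟨h, three_mul_prod_mul_sum_le_sq_sum_mul x y z⟩

theorem sum_sq_sub_sum_sq_sub_eq_ravi {R : Type*} [CommRing R] (a b c : R) :
    a ^ 2 + b ^ 2 + c ^ 2 - ((a - b) ^ 2 + (b - c) ^ 2 + (c - a) ^ 2) =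
      (-a + b + c) * (a - b + c) + (a - b + c) * (a + b - c) + (a + b - c) * (-a + b + c) := by
  ring

theorem four_mul_eq_sqrt_ravi_of_heron {a b c S : ℝ} (hS : 0 ≤ S)
    (heron : 16 * S ^ 2 = (a + b + c) * (-a + b + c) * (a - b + c) * (a + b - c)) :
    4 * S = √((-a + b + c) * (a - b + c) * (a + b - c) *
      ((-a + b + c) + (a - b + c) + (a + b - c))) := by
  rw [← Real.sqrt_sq (by positivity : 0 ≤ 4 * S)]
  congr 1
  linear_combination heron

/-- Finsler–Hadwiger inequality: for any (possibly degenerate) triangle with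
side lengths `a, b, c` and Heron area `S`, we have
`a² + b² + c² ≥ (a−b)² + (b−c)² + (c−a)² + 4√3·S`. -/
theorem finsler_hadwiger (a b c S : ℝ)
    (ha : 0 ≤ a) (hb : 0 ≤ b) (hc : 0 ≤ c)
    (hab : a ≤ b + c) (hbc : b ≤ c + a) (hca : c ≤ a + b)
    (hS : 0 ≤ S)
    (heron : 16 * S ^ 2 = (a + b + c) * (-a + b + c) * (a - b + c) * (a + b - c)) :
    a ^ 2 + b ^ 2 + c ^ 2 ≥
      (a - b) ^ 2 + (b - c) ^ 2 + (c - a) ^ 2 + 4 * Real.sqrt 3 * S := by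
  have area := four_mul_eq_sqrt_ravi_of_heron hS heron
  have deficit := sum_sq_sub_sum_sq_sub_eq_ravi a b c
  have hx : 0 ≤ -a + b + c := by linarith
  have hy : 0 ≤ a - b + c := by linarith
  have hz : 0 ≤ a + b - c := by linarith
  generalize -a + b + c = x, a - b + c = y, a + b - c = z at *
  have area_le : 4 * √3 * S ≤ x * y + y * z + z * x :=
    calc
      4 * √3 * S = √3 * (4 * S) := by ring
      _ = √3 * √(x * y * z * (x + y + z)) := by rw [area]
      _ ≤ x * y + y * z + z * x := sqrt_three_mul_sqrt_prod_mul_sum_le (by positivity)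
  linarith
end

section
/- For any (possibly degenerate) triangle with side lengths a, b, c and area S, the reverse Finsler–Hadwiger inequality holds: a² + b² + c² ≤ 3[(a−b)² + (b−c)² + (c−a)²] + 4√3·S. -/
/-!
Ravi's substitution `a = y + z`, `b = z + x`, `c = x + y` turns the inequality into
`4q - p² ≤ √(3pr)`, where `p = x + y + z`, `q = xy + yz + zx`, `r = xyz` and `S² = pr`.
Schur's inequality of degree one says `p (4q - p²) ≤ 9r`. On the other hand
`3√(3pr) ≤ 3q ≤ p²`, which is the isoperimetric inequality for triangles; multiplying it by
`√(3pr)` gives `9r ≤ p √(3pr)`.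
-/

section OrderedRing

variable {R : Type*} [CommRing R] [LinearOrder R] [IsStrictOrderedRing R]

lemma schur_weighted_of_le {x y z u v w : R} (hzy : z ≤ y) (hyx : y ≤ x)
    (hv : 0 ≤ v) (hvu : v ≤ u) (hw : 0 ≤ w) :
    0 ≤ u * (x - y) * (x - z) + v * (y - z) * (y - x) + w * (z - x) * (z - y) := by
  have hxy : 0 ≤ x - y := sub_nonneg.2 hyx
  have hyz : 0 ≤ y - z := sub_nonneg.2 hzy
  have hxz : y - z ≤ x - z := sub_le_sub_right hyx z
  have hweighted : v * (y - z) ≤ u * (x - z) := mul_le_mul hvu hxz hyz (hv.trans hvu)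
  calc
    0 ≤ (x - y) * (u * (x - z) - v * (y - z)) + w * ((x - z) * (y - z)) :=
      add_nonneg (mul_nonneg hxy (sub_nonneg.2 hweighted))
        (mul_nonneg hw (mul_nonneg (hyz.trans hxz) hyz))
    _ = u * (x - y) * (x - z) + v * (y - z) * (y - x) + w * (z - x) * (z - y) := by ring

lemma schur_inequality {x y z : R} (n : ℕ) (hx : 0 ≤ x) (hy : 0 ≤ y) (hz : 0 ≤ z) :
    0 ≤ x ^ n * (x - y) * (x - z) + y ^ n * (y - z) * (y - x) + z ^ n * (z - x) * (z - y) := by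
  wlog hyx : y ≤ x generalizing x y
  · linarith [this hy hx (le_of_not_ge hyx)]
  have hxn : 0 ≤ x ^ n := pow_nonneg hx n
  have hyn : 0 ≤ y ^ n := pow_nonneg hy n
  have hzn : 0 ≤ z ^ n := pow_nonneg hz n
  rcases le_total z y with hzy | hyz
  · exact schur_weighted_of_le hzy hyx hyn (pow_le_pow_left₀ hy hyx n) hzn
  rcases le_total z x with hzx | hxz
  · linarith [schur_weighted_of_le hyz hzx hzn (pow_le_pow_left₀ hz hzx n) hyn]
  · linarith [schur_weighted_of_le hyx hxz hxn (pow_le_pow_left₀ hx hxz n) hyn]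

lemma four_mul_sub_add_sq_mul_add_le {x y z : R} (hx : 0 ≤ x) (hy : 0 ≤ y) (hz : 0 ≤ z) :
    (4 * (x * y + y * z + z * x) - (x + y + z) ^ 2) * (x + y + z) ≤ 9 * (x * y * z) := by
  linarith [schur_inequality 1 hx hy hz]

lemma three_mul_add_mul_le_add_sq (x y z : R) :
    3 * (x * y + y * z + z * x) ≤ (x + y + z) ^ 2 := by
  linarith [sq_nonneg (x - y), sq_nonneg (y - z), sq_nonneg (z - x)]

end OrderedRing

section Real

variable {x y z : ℝ}

lemma three_mul_sqrt_le_add_sq (hx : 0 ≤ x) (hy : 0 ≤ y) (hz : 0 ≤ z) :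
    3 * √(3 * (x + y + z) * (x * y * z)) ≤ (x + y + z) ^ 2 := by
  have hq : √(3 * (x + y + z) * (x * y * z)) ≤ x * y + y * z + z * x := by
    refine Real.sqrt_le_iff.2 ⟨by positivity, ?_⟩
    linarith [three_mul_add_mul_le_add_sq (x * y) (y * z) (z * x)]
  linarith [three_mul_add_mul_le_add_sq x y z]

lemma four_mul_sub_add_sq_le_sqrt (hx : 0 ≤ x) (hy : 0 ≤ y) (hz : 0 ≤ z) :
    4 * (x * y + y * z + z * x) - (x + y + z) ^ 2 ≤ √(3 * (x + y + z) * (x * y * z)) := by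
  have hp : 0 ≤ x + y + z := by positivity
  have hschur := four_mul_sub_add_sq_mul_add_le hx hy hz
  have hiso := three_mul_sqrt_le_add_sq hx hy hz
  have hsq : √(3 * (x + y + z) * (x * y * z)) ^ 2 = 3 * (x + y + z) * (x * y * z) :=
    Real.sq_sqrt (by positivity)
  set p := x + y + z
  set T := √(3 * p * (x * y * z))
  rcases hp.eq_or_lt' with hp | hp
  · obtain ⟨rfl, rfl, rfl⟩ : x = 0 ∧ y = 0 ∧ z = 0 := by
      refine ⟨?_, ?_, ?_⟩ <;> linarith
    simp [T, p]
  have hr : 9 * (x * y * z) ≤ T * p := by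
    refine le_of_mul_le_mul_right ?_ hp
    calc
      9 * (x * y * z) * p = 3 * T ^ 2 := by rw [hsq]; ring
      _ = T * (3 * T) := by ring
      _ ≤ T * p ^ 2 := by gcongr
      _ = T * p * p := by ring
  exact le_of_mul_le_mul_right (hschur.trans hr) hp

end Real

/-- Reverse Finsler–Hadwiger inequality: for any (possibly degenerate) triangle with
side lengths `a, b, c` and Heron area `S`, we have
`a² + b² + c² ≤ 3[(a−b)² + (b−c)² + (c−a)²] + 4√3·S`. -/
theorem reverse_finsler_hadwiger (a b c S : ℝ)
    (ha : 0 ≤ a) (hb : 0 ≤ b) (hc : 0 ≤ c)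
    (hab : a ≤ b + c) (hbc : b ≤ c + a) (hca : c ≤ a + b)
    (hS : 0 ≤ S)
    (heron : 16 * S ^ 2 = (a + b + c) * (-a + b + c) * (a - b + c) * (a + b - c)) :
    a ^ 2 + b ^ 2 + c ^ 2 ≤
      3 * ((a - b) ^ 2 + (b - c) ^ 2 + (c - a) ^ 2) + 4 * Real.sqrt 3 * S := by
  obtain ⟨x, hx⟩ : ∃ x, x = (b + c - a) / 2 := ⟨_, rfl⟩
  obtain ⟨y, hy⟩ : ∃ y, y = (c + a - b) / 2 := ⟨_, rfl⟩
  obtain ⟨z, hz⟩ : ∃ z, z = (a + b - c) / 2 := ⟨_, rfl⟩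
  obtain rfl : a = y + z := by linarith
  obtain rfl : b = z + x := by linarith
  obtain rfl : c = x + y := by linarith
  have harea : √3 * S = √(3 * (x + y + z) * (x * y * z)) := by
    rw [← Real.sqrt_sq hS, ← Real.sqrt_mul zero_le_three]
    congr 1
    linear_combination (3 / 16) * heron
  have hravi := four_mul_sub_add_sq_le_sqrt (x := x) (y := y) (z := z)
    (by linarith) (by linarith) (by linarith)
  rw [← harea] at hravi
  linarith
end

section
/- Equality holds in the Finsler–Hadwiger inequality a² + b² + c² ≥ (a−b)² + (b−c)² + (c−a)² + 4√3·S if and only if the triangle is equilateral (a = b = c) or degenerate with one side of length zero and the other two equal (up to permutation, c = 0 and a = b). -/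
/-!
Put `x = -a + b + c`, `y = a - b + c`, `z = a + b - c`. Then equality reads
`x * y + y * z + z * x = √3 * (4 * S)`, while Heron's formula says
`(4 * S) ^ 2 = (x + y + z) * x * y * z`. Squaring, this is the equality case of
`3 * (p * q + q * r + r * p) ≤ (p + q + r) ^ 2` at `p = x * y`, `q = y * z`, `r = z * x`, so it
means `x * y = y * z = z * x`: either `x = y = z`, or two of the three vanish. In each of these
cases `x * y + y * z + z * x` is nonnegative, so nothing is lost by squaring.
-/

theorem add_add_sq_eq_three_mul_iff {R : Type*} [CommRing R] [LinearOrder R]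
    [IsStrictOrderedRing R] {p q r : R} :
    (p + q + r) ^ 2 = 3 * (p * q + q * r + r * p) ↔ p = q ∧ q = r := by
  constructor
  · intro h
    have sum_sq : (p - q) ^ 2 + (q - r) ^ 2 + (r - p) ^ 2 = 0 := by linear_combination 2 * h
    have hpq : (p - q) ^ 2 = 0 := by
      linarith [sum_sq, sq_nonneg (p - q), sq_nonneg (q - r), sq_nonneg (r - p)]
    have hqr : (q - r) ^ 2 = 0 := by
      linarith [sum_sq, sq_nonneg (p - q), sq_nonneg (q - r), sq_nonneg (r - p)]
    exact ⟨sub_eq_zero.1 (sq_eq_zero_iff.1 hpq), sub_eq_zero.1 (sq_eq_zero_iff.1 hqr)⟩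
  · rintro ⟨rfl, rfl⟩
    ring

theorem cyclic_mul_eq_iff {M₀ : Type*} [CommMonoidWithZero M₀] [IsCancelMulZero M₀]
    {x y z : M₀} :
    x * y = y * z ∧ y * z = z * x ↔
      (x = y ∧ y = z) ∨ (y = 0 ∧ z = 0) ∨ (z = 0 ∧ x = 0) ∨ (x = 0 ∧ y = 0) := by
  rw [mul_comm x y, mul_eq_mul_left_iff, mul_comm y z, mul_eq_mul_left_iff]
  grind

theorem cyclic_mul_sum_nonneg {R : Type*} [CommRing R] [LinearOrder R]
    [IsStrictOrderedRing R] {x y z : R} (h : x * y = y * z ∧ y * z = z * x) :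
    0 ≤ x * y + y * z + z * x := by
  rcases cyclic_mul_eq_iff.1 h with ⟨rfl, rfl⟩ | ⟨rfl, rfl⟩ | ⟨rfl, rfl⟩ | ⟨rfl, rfl⟩
  · linarith [mul_self_nonneg x]
  all_goals simp

theorem eq_sqrt_mul_iff {r s t : ℝ} (hr : 0 ≤ r) (hs : 0 ≤ s) :
    t = √r * s ↔ t ^ 2 = r * s ^ 2 ∧ 0 ≤ t := by
  have sq_rhs : (√r * s) ^ 2 = r * s ^ 2 := by rw [mul_pow, Real.sq_sqrt hr]
  constructor
  · rintro rfl
    exact ⟨sq_rhs, by positivity⟩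
  · rintro ⟨h, ht⟩
    exact (sq_eq_sq₀ ht (by positivity)).1 (h.trans sq_rhs.symm)

theorem cyclic_mul_sum_eq_sqrt_three_mul_iff {x y z T : ℝ} (hT : 0 ≤ T)
    (heron : T ^ 2 = (x + y + z) * x * y * z) :
    x * y + y * z + z * x = √3 * T ↔
      (x = y ∧ y = z) ∨ (y = 0 ∧ z = 0) ∨ (z = 0 ∧ x = 0) ∨ (x = 0 ∧ y = 0) := by
  have products : T ^ 2 = x * y * (y * z) + y * z * (z * x) + z * x * (x * y) := by
    rw [heron]; ring
  calc x * y + y * z + z * x = √3 * T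
    _ ↔ (x * y + y * z + z * x) ^ 2 = 3 * T ^ 2 ∧ 0 ≤ x * y + y * z + z * x :=
      eq_sqrt_mul_iff zero_le_three hT
    _ ↔ (x * y = y * z ∧ y * z = z * x) ∧ 0 ≤ x * y + y * z + z * x := by
      rw [products, add_add_sq_eq_three_mul_iff]
    _ ↔ x * y = y * z ∧ y * z = z * x := and_iff_left_of_imp cyclic_mul_sum_nonneg
    _ ↔ _ := cyclic_mul_eq_iff

theorem finsler_hadwiger_equality_general (a b c S : ℝ) (hS : 0 ≤ S)
    (heron : 16 * S ^ 2 = (a + b + c) * (-a + b + c) * (a - b + c) * (a + b - c)) :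
    a ^ 2 + b ^ 2 + c ^ 2 =
        (a - b) ^ 2 + (b - c) ^ 2 + (c - a) ^ 2 + 4 * Real.sqrt 3 * S ↔
      (a = b ∧ b = c) ∨ (a = 0 ∧ b = c) ∨ (b = 0 ∧ c = a) ∨ (c = 0 ∧ a = b) := by
  obtain ⟨x, hx⟩ : ∃ x, x = -a + b + c := ⟨_, rfl⟩
  obtain ⟨y, hy⟩ : ∃ y, y = a - b + c := ⟨_, rfl⟩
  obtain ⟨z, hz⟩ : ∃ z, z = a + b - c := ⟨_, rfl⟩
  have heron_xyz : (4 * S) ^ 2 = (x + y + z) * x * y * z := by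
    rw [hx, hy, hz]; linear_combination heron
  have defect : a ^ 2 + b ^ 2 + c ^ 2 - ((a - b) ^ 2 + (b - c) ^ 2 + (c - a) ^ 2) =
      x * y + y * z + z * x := by
    rw [hx, hy, hz]; ring
  calc _ ↔ x * y + y * z + z * x = √3 * (4 * S) := by
        rw [← defect, sub_eq_iff_eq_add', mul_left_comm, ← mul_assoc]
    _ ↔ (x = y ∧ y = z) ∨ (y = 0 ∧ z = 0) ∨ (z = 0 ∧ x = 0) ∨ (x = 0 ∧ y = 0) :=
      cyclic_mul_sum_eq_sqrt_three_mul_iff (by positivity) heron_xyz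
    _ ↔ _ := by grind

/-- Equality case in the Finsler–Hadwiger inequality: for a (possibly degenerate)
triangle with sides `a, b, c` not all zero and Heron area `S`, equality
`a² + b² + c² = (a−b)² + (b−c)² + (c−a)² + 4√3·S` holds iff the triangle is
equilateral or degenerate with one side zero and the other two equal. -/
theorem finsler_hadwiger_equality (a b c S : ℝ)
    (ha : 0 ≤ a) (hb : 0 ≤ b) (hc : 0 ≤ c)
    (hab : a ≤ b + c) (hbc : b ≤ c + a) (hca : c ≤ a + b)
    (hne : ¬ (a = 0 ∧ b = 0 ∧ c = 0))
    (hS : 0 ≤ S)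
    (heron : 16 * S ^ 2 = (a + b + c) * (-a + b + c) * (a - b + c) * (a + b - c)) :
    a ^ 2 + b ^ 2 + c ^ 2 =
        (a - b) ^ 2 + (b - c) ^ 2 + (c - a) ^ 2 + 4 * Real.sqrt 3 * S ↔
      (a = b ∧ b = c) ∨ (a = 0 ∧ b = c) ∨ (b = 0 ∧ c = a) ∨ (c = 0 ∧ a = b) :=
  finsler_hadwiger_equality_general a b c S hS heron
end

section
/- For a degenerate triangle with sides a = b + c (b, c ≥ 0 not both zero), the ratio X = Q/(a+b+c)² satisfies 1/8 ≤ X ≤ 1/2, with X = 1/8 if and only if b = c and X = 1/2 if and only if b = 0 or c = 0; moreover, every value t ∈ [1/8, 1/2] is attained as X for some choice of b, c ≥ 0 not both zero with a = b + c. Consequently, the intersection of the Blaschke–Santaló diagram with the line Y = 0 is exactly the segment [1/8, 1/2] × {0}. -/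
/-!
For `a = b + c ≠ 0`, the perimeter is `2 * (b + c)` and the ratio has two expressions,
`X = 1/8 + 3/8 * ((b - c) / (b + c)) ^ 2 = 1/2 - 3/2 * (b * c / (b + c) ^ 2)`.
The first exhibits the minimum and its equality case, the second the maximum and its equality case.
On the segment `b + c = 1` the first reads `X = 1/8 + 3/8 * (b - c) ^ 2`, so prescribing `X = t`
amounts to prescribing the difference `b - c = √((8 * t - 1) / 3)`.
-/

/-- The abscissa `X = Q / (a + b + c) ^ 2` of the Blaschke–Santaló diagram, as a function of the
side lengths. It is defined for arbitrary elements of a field, and is `0` when `a + b + c = 0`. -/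
def sideDispersion {K : Type*} [Field K] (a b c : K) : K :=
  ((a - b) ^ 2 + (b - c) ^ 2 + (c - a) ^ 2) / (a + b + c) ^ 2

namespace sideDispersion

section Field

variable {K : Type*} [Field K] [NeZero (2 : K)] {b c : K}

private theorem eight_ne_zero : (8 : K) ≠ 0 := by
  have eight_eq : (8 : K) = 2 ^ 3 := by norm_num
  exact eight_eq ▸ pow_ne_zero 3 two_ne_zero

theorem add_left_eq_one_eighth_add (h : b + c ≠ 0) :
    sideDispersion (b + c) b c = 1 / 8 + 3 / 8 * ((b - c) / (b + c)) ^ 2 := by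
  have eight_ne : (8 : K) ≠ 0 := eight_ne_zero
  have perimeter : b + c + b + c = 2 * (b + c) := by ring
  rw [sideDispersion, perimeter]
  field_simp
  ring

theorem add_left_eq_one_half_sub (h : b + c ≠ 0) :
    sideDispersion (b + c) b c = 1 / 2 - 3 / 2 * (b * c / (b + c) ^ 2) := by
  have perimeter : b + c + b + c = 2 * (b + c) := by ring
  rw [sideDispersion, perimeter]
  field_simp
  ring

variable [NeZero (3 : K)]

theorem add_left_eq_one_eighth_iff (h : b + c ≠ 0) :
    sideDispersion (b + c) b c = 1 / 8 ↔ b = c := by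
  simp [add_left_eq_one_eighth_add h, h, eight_ne_zero, three_ne_zero, sub_eq_zero]

theorem add_left_eq_one_half_iff (h : b + c ≠ 0) :
    sideDispersion (b + c) b c = 1 / 2 ↔ b = 0 ∨ c = 0 := by
  simp [add_left_eq_one_half_sub h, h, two_ne_zero, three_ne_zero]

end Field

section LinearOrderedField

variable {K : Type*} [Field K] [LinearOrder K] [IsStrictOrderedRing K] {b c : K}

theorem one_eighth_le_add_left (h : b + c ≠ 0) : 1 / 8 ≤ sideDispersion (b + c) b c := by
  rw [add_left_eq_one_eighth_add h]
  exact le_add_of_nonneg_right (by positivity)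

theorem add_left_le_one_half (h : b + c ≠ 0) (hbc : 0 ≤ b * c) :
    sideDispersion (b + c) b c ≤ 1 / 2 := by
  rw [add_left_eq_one_half_sub h]
  exact sub_le_self _ (by positivity)

end LinearOrderedField

theorem exists_add_eq_one_and_eq {t : ℝ} (ht : t ∈ Set.Icc (1 / 8) (1 / 2)) :
    ∃ b c : ℝ, 0 ≤ b ∧ 0 ≤ c ∧ b + c = 1 ∧ sideDispersion (b + c) b c = t := by
  obtain ⟨ht₁, ht₂⟩ := ht
  set s := √((8 * t - 1) / 3)
  have s_nonneg : 0 ≤ s := Real.sqrt_nonneg _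
  have s_le_one : s ≤ 1 := Real.sqrt_le_one.mpr (by linarith)
  have s_sq : s ^ 2 = (8 * t - 1) / 3 := Real.sq_sqrt (by linarith)
  have sum_eq : (1 + s) / 2 + (1 - s) / 2 = 1 := by ring
  have diff_eq : (1 + s) / 2 - (1 - s) / 2 = s := by ring
  refine ⟨(1 + s) / 2, (1 - s) / 2, by linarith, by linarith, sum_eq, ?_⟩
  have sum_ne_zero : (1 + s) / 2 + (1 - s) / 2 ≠ 0 := sum_eq.trans_ne one_ne_zero
  rw [add_left_eq_one_eighth_add sum_ne_zero, sum_eq, diff_eq, div_one, s_sq]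
  ring

end sideDispersion

/-- For a degenerate triangle with sides `a = b + c` (`b, c ≥ 0` not both zero),
the ratio `X = Q/(a+b+c)²` satisfies `1/8 ≤ X ≤ 1/2`, with `X = 1/8 ↔ b = c`
and `X = 1/2 ↔ b = 0 ∨ c = 0`; moreover every value `t ∈ [1/8, 1/2]` is attained.
Hence the intersection of the Blaschke–Santaló diagram with `Y = 0` is exactly
the segment `[1/8, 1/2] × {0}`. -/
theorem degenerate_slice (a b c Q : ℝ)
    (hb : 0 ≤ b) (hc : 0 ≤ c) (hbc : ¬ (b = 0 ∧ c = 0))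
    (hdeg : a = b + c)
    (hQ : Q = (a - b) ^ 2 + (b - c) ^ 2 + (c - a) ^ 2) :
    (1 / 8 ≤ Q / (a + b + c) ^ 2 ∧ Q / (a + b + c) ^ 2 ≤ 1 / 2) ∧
      (Q / (a + b + c) ^ 2 = 1 / 8 ↔ b = c) ∧
      (Q / (a + b + c) ^ 2 = 1 / 2 ↔ b = 0 ∨ c = 0) ∧
      (∀ t : ℝ, 1 / 8 ≤ t → t ≤ 1 / 2 →
        ∃ b' c' : ℝ, 0 ≤ b' ∧ 0 ≤ c' ∧ ¬ (b' = 0 ∧ c' = 0) ∧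
          (((b' + c') - b') ^ 2 + (b' - c') ^ 2 + (c' - (b' + c')) ^ 2) /
            ((b' + c') + b' + c') ^ 2 = t) := by
  subst hdeg hQ
  have hsum : b + c ≠ 0 := mt (add_eq_zero_iff_of_nonneg hb hc).mp hbc
  refine ⟨⟨sideDispersion.one_eighth_le_add_left hsum,
    sideDispersion.add_left_le_one_half hsum (mul_nonneg hb hc)⟩,
    sideDispersion.add_left_eq_one_eighth_iff hsum,
    sideDispersion.add_left_eq_one_half_iff hsum, fun t ht₁ ht₂ ↦ ?_⟩
  obtain ⟨b', c', hb', hc', hsum', ht⟩ := sideDispersion.exists_add_eq_one_and_eq ⟨ht₁, ht₂⟩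
  refine ⟨b', c', hb', hc', ?_, ht⟩
  rintro ⟨rfl, rfl⟩
  simp at hsum'
end

section
/- For any (possibly degenerate) triangle with side lengths a, b, c, area S and isoperimetric deficit Q, the sharp upper bound holds: 432·S² ≤ (a+b+c)⁴ − 6Q(a+b+c)² + 4√2·Q^{3/2}·(a+b+c). -/
/-!
Write `p = a + b + c` and let `x = p - 3a`, `y = p - 3b`, `z = p - 3c` be the deviations from the
equilateral triangle, so that `x + y + z = 0` and `x² + y² + z² = 3Q`. Heron's product, multiplied
by `27`, is `p (p + 2x) (p + 2y) (p + 2z) = p⁴ - 6 Q p² + 8 x y z p`. Hence everything reduces to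
bounding `x y z` by `Q`, and this is the nonnegativity of the discriminant of the depressed cubic
with roots `x`, `y`, `z`. The discriminant vanishes when two roots agree, so isosceles triangles
make the estimate of `|x y z|` an equality.
-/

theorem two_mul_mul_mul_sq_le_mean_sq_cube_of_add_eq_zero {K : Type*} [Field K] [LinearOrder K]
    [IsStrictOrderedRing K] {x y z : K} (h : x + y + z = 0) :
    2 * (x * y * z) ^ 2 ≤ ((x ^ 2 + y ^ 2 + z ^ 2) / 3) ^ 3 := by
  have discr_eq : ((x ^ 2 + y ^ 2 + z ^ 2) / 3) ^ 3 - 2 * (x * y * z) ^ 2 =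
      2 / 27 * ((x - y) * (y - z) * (z - x)) ^ 2 := by
    obtain rfl : z = -x - y := by linear_combination h
    ring
  exact sub_nonneg.mp (discr_eq ▸ by positivity)

theorem sqrt_two_mul_abs_mul_mul_le_mean_sq_rpow_of_add_eq_zero {x y z : ℝ} (h : x + y + z = 0) :
    √2 * |x * y * z| ≤ ((x ^ 2 + y ^ 2 + z ^ 2) / 3) ^ ((3 : ℝ) / 2) :=
  calc
    √2 * |x * y * z| = √(2 * (x * y * z) ^ 2) := by
      rw [Real.sqrt_mul zero_le_two, Real.sqrt_sq_eq_abs]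
    _ ≤ √(((x ^ 2 + y ^ 2 + z ^ 2) / 3) ^ 3) :=
      Real.sqrt_le_sqrt (two_mul_mul_mul_sq_le_mean_sq_cube_of_add_eq_zero h)
    _ = ((x ^ 2 + y ^ 2 + z ^ 2) / 3) ^ ((3 : ℝ) / 2) := by
      rw [Real.sqrt_eq_rpow, ← Real.rpow_natCast_mul (by positivity)]
      norm_num

theorem twentySeven_mul_heron_prod_eq {R : Type*} [CommRing R] (a b c : R) :
    27 * ((a + b + c) * (-a + b + c) * (a - b + c) * (a + b - c)) =
      (a + b + c) ^ 4 - 6 * ((a - b) ^ 2 + (b - c) ^ 2 + (c - a) ^ 2) * (a + b + c) ^ 2 +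
        8 * ((b + c - 2 * a) * (c + a - 2 * b) * (a + b - 2 * c)) * (a + b + c) := by
  ring

theorem sqrt_two_mul_abs_mul_deviations_le_rpow (a b c : ℝ) :
    √2 * |(b + c - 2 * a) * (c + a - 2 * b) * (a + b - 2 * c)| ≤
      ((a - b) ^ 2 + (b - c) ^ 2 + (c - a) ^ 2) ^ ((3 : ℝ) / 2) := by
  have mean_sq : ((b + c - 2 * a) ^ 2 + (c + a - 2 * b) ^ 2 + (a + b - 2 * c) ^ 2) / 3 =
      (a - b) ^ 2 + (b - c) ^ 2 + (c - a) ^ 2 := by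
    ring
  rw [← mean_sq]
  exact sqrt_two_mul_abs_mul_mul_le_mean_sq_rpow_of_add_eq_zero (by ring)

theorem sharp_upper_bound_general (a b c Q : ℝ)
    (hQ : Q = (a - b) ^ 2 + (b - c) ^ 2 + (c - a) ^ 2) :
    27 * ((a + b + c) * (-a + b + c) * (a - b + c) * (a + b - c)) ≤
      (a + b + c) ^ 4 - 6 * Q * (a + b + c) ^ 2 +
        4 * √2 * Q ^ ((3 : ℝ) / 2) * |a + b + c| := by
  rw [twentySeven_mul_heron_prod_eq, ← hQ]
  set e := (b + c - 2 * a) * (c + a - 2 * b) * (a + b - 2 * c)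
  gcongr _ + ?_
  calc
    8 * e * (a + b + c) ≤ 8 * |e * (a + b + c)| := by
      rw [mul_assoc]
      gcongr
      exact le_abs_self _
    _ = 4 * √2 * (√2 * |e|) * |a + b + c| := by
      rw [abs_mul]
      linear_combination -4 * |e| * |a + b + c| * Real.sq_sqrt (zero_le_two (α := ℝ))
    _ ≤ 4 * √2 * Q ^ ((3 : ℝ) / 2) * |a + b + c| := by
      gcongr
      rw [hQ]
      exact sqrt_two_mul_abs_mul_deviations_le_rpow a b c

/-- Sharp upper bound for the area of a (possibly degenerate) triangle in terms
of the perimeter and the isoperimetric deficit `Q`: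
`432·S² ≤ (a+b+c)⁴ − 6Q(a+b+c)² + 4√2·Q^{3/2}·(a+b+c)`. -/
theorem sharp_upper_bound (a b c S Q : ℝ)
    (ha : 0 ≤ a) (hb : 0 ≤ b) (hc : 0 ≤ c)
    (hab : a ≤ b + c) (hbc : b ≤ c + a) (hca : c ≤ a + b)
    (hS : 0 ≤ S)
    (heron : 16 * S ^ 2 = (a + b + c) * (-a + b + c) * (a - b + c) * (a + b - c))
    (hQ : Q = (a - b) ^ 2 + (b - c) ^ 2 + (c - a) ^ 2) :
    432 * S ^ 2 ≤ (a + b + c) ^ 4 - 6 * Q * (a + b + c) ^ 2 +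
      4 * Real.sqrt 2 * Q ^ ((3 : ℝ) / 2) * (a + b + c) := by
  have bound := sharp_upper_bound_general a b c Q hQ
  rw [abs_of_nonneg (by positivity)] at bound
  linarith
end

section
/- For any (possibly degenerate) triangle with side lengths a, b, c, area S and isoperimetric deficit Q satisfying Q ≤ (1/8)(a+b+c)², the sharp lower bound holds: 432·S² ≥ (a+b+c)⁴ − 6Q(a+b+c)² − 4√2·Q^{3/2}·(a+b+c). -/
/-!
Write `p = a + b + c` and let `x = p - 3a`, `y = p - 3b`, `z = p - 3c` be the scaled deviations of
the sides from those of the equilateral triangle of the same perimeter. They sum to zero, so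
expanding Heron's product `p (p - 2a) (p - 2b) (p - 2c)` in them leaves no term in `p³`: after
multiplication by `27` it is `p⁴ - 6 Q p² + 8 x y z p`. The discriminant of the cubic with roots
`x`, `y`, `z` is a square, which says that `2 (x y z)² ≤ Q³`, with equality exactly for isosceles
triangles. Hence `8 x y z ≥ -4 √2 Q ^ (3 / 2)`.
-/

section CommRing

variable {R : Type*} [CommRing R]

/-- The isoperimetric deficit `Q` of a triangle with sides `a`, `b`, `c`, in the normalization of
the theorem. -/
def isoperimetricDeficit (a b c : R) : R :=
  (a - b) ^ 2 + (b - c) ^ 2 + (c - a) ^ 2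

/-- The product of the deviations of `a`, `b`, `c` from their mean, which measures how skewed a
triangle is. Each deviation is scaled by `-3`, so that no division is needed. -/
def deviationProduct (a b c : R) : R :=
  (b + c - 2 * a) * (c + a - 2 * b) * (a + b - 2 * c)

theorem heron_product_eq (a b c : R) :
    27 * ((a + b + c) * (-a + b + c) * (a - b + c) * (a + b - c)) =
      (a + b + c) ^ 4 - 6 * isoperimetricDeficit a b c * (a + b + c) ^ 2 +
        8 * deviationProduct a b c * (a + b + c) := by
  unfold isoperimetricDeficit deviationProduct
  ring

theorem isoperimetricDeficit_pow_three (a b c : R) :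
    isoperimetricDeficit a b c ^ 3 =
      2 * deviationProduct a b c ^ 2 + 54 * ((a - b) * (b - c) * (c - a)) ^ 2 := by
  -- The formula `Δ = -4 e₂³ - 27 e₃²` for the depressed cubic whose roots are the factors of
  -- `deviationProduct`; these differ by `3 (a - b)`, `3 (b - c)`, `3 (c - a)`, and `2 e₂ = -3 Q`.
  unfold isoperimetricDeficit deviationProduct
  ring

variable [LinearOrder R] [IsOrderedRing R]

theorem isoperimetricDeficit_nonneg (a b c : R) : 0 ≤ isoperimetricDeficit a b c :=
  add_nonneg (add_nonneg (sq_nonneg _) (sq_nonneg _)) (sq_nonneg _)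

theorem two_mul_deviationProduct_sq_le (a b c : R) :
    2 * deviationProduct a b c ^ 2 ≤ isoperimetricDeficit a b c ^ 3 := by
  rw [isoperimetricDeficit_pow_three]
  exact le_add_of_nonneg_right (mul_nonneg (Nat.ofNat_nonneg 54) (sq_nonneg _))

end CommRing

theorem abs_sqrt_two_mul_deviationProduct_le (a b c : ℝ) :
    |√2 * deviationProduct a b c| ≤ isoperimetricDeficit a b c ^ ((3 : ℝ) / 2) := by
  have sq_le : (√2 * deviationProduct a b c) ^ 2 ≤ isoperimetricDeficit a b c ^ 3 := by
    rw [mul_pow, Real.sq_sqrt zero_le_two]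
    exact two_mul_deviationProduct_sq_le a b c
  calc
    |√2 * deviationProduct a b c| ≤ √(isoperimetricDeficit a b c ^ 3) := Real.abs_le_sqrt sq_le
    _ = isoperimetricDeficit a b c ^ ((3 : ℝ) / 2) := by
      rw [Real.sqrt_eq_rpow, ← Real.rpow_natCast_mul (isoperimetricDeficit_nonneg a b c)]
      norm_num

theorem neg_isoperimetricDeficit_rpow_le_deviationProduct (a b c : ℝ) :
    -(4 * √2 * isoperimetricDeficit a b c ^ ((3 : ℝ) / 2)) ≤ 8 * deviationProduct a b c :=
  calc
    -(4 * √2 * isoperimetricDeficit a b c ^ ((3 : ℝ) / 2)) =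
        4 * √2 * -isoperimetricDeficit a b c ^ ((3 : ℝ) / 2) := by ring
    _ ≤ 4 * √2 * (√2 * deviationProduct a b c) := by
      gcongr
      exact neg_le_of_abs_le (abs_sqrt_two_mul_deviationProduct_le a b c)
    _ = 8 * deviationProduct a b c := by
      linear_combination 4 * deviationProduct a b c * Real.mul_self_sqrt zero_le_two

theorem sharp_lower_bound_general (a b c S Q : ℝ) (hp : 0 ≤ a + b + c)
    (heron : 16 * S ^ 2 = (a + b + c) * (-a + b + c) * (a - b + c) * (a + b - c))
    (hQ : Q = (a - b) ^ 2 + (b - c) ^ 2 + (c - a) ^ 2) :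
    432 * S ^ 2 ≥ (a + b + c) ^ 4 - 6 * Q * (a + b + c) ^ 2 -
      4 * √2 * Q ^ ((3 : ℝ) / 2) * (a + b + c) := by
  change Q = isoperimetricDeficit a b c at hQ
  have area_eq : 432 * S ^ 2 = (a + b + c) ^ 4 - 6 * Q * (a + b + c) ^ 2 +
      8 * deviationProduct a b c * (a + b + c) := by
    rw [hQ, ← heron_product_eq, ← heron]
    ring
  have skew_le : -(4 * √2 * Q ^ ((3 : ℝ) / 2)) * (a + b + c) ≤
      8 * deviationProduct a b c * (a + b + c) := by
    rw [hQ]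
    gcongr
    exact neg_isoperimetricDeficit_rpow_le_deviationProduct a b c
  linarith

/-- Sharp lower bound for the area of a (possibly degenerate) triangle in terms of
the perimeter and the isoperimetric deficit `Q`, valid when `Q ≤ (a+b+c)²/8`:
`432·S² ≥ (a+b+c)⁴ − 6Q(a+b+c)² − 4√2·Q^{3/2}·(a+b+c)`. -/
theorem sharp_lower_bound (a b c S Q : ℝ)
    (ha : 0 ≤ a) (hb : 0 ≤ b) (hc : 0 ≤ c)
    (hab : a ≤ b + c) (hbc : b ≤ c + a) (hca : c ≤ a + b)
    (hS : 0 ≤ S)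
    (heron : 16 * S ^ 2 = (a + b + c) * (-a + b + c) * (a - b + c) * (a + b - c))
    (hQ : Q = (a - b) ^ 2 + (b - c) ^ 2 + (c - a) ^ 2)
    (hQsmall : Q ≤ (1 / 8) * (a + b + c) ^ 2) :
    432 * S ^ 2 ≥ (a + b + c) ^ 4 - 6 * Q * (a + b + c) ^ 2 -
      4 * Real.sqrt 2 * Q ^ ((3 : ℝ) / 2) * (a + b + c) :=
  sharp_lower_bound_general a b c S Q (by positivity) heron hQ
end

section
/- For every t ∈ [0, 1/2] there exists a (possibly degenerate) triangle with side lengths a, b, c (not all zero) such that Q/(a+b+c)² = t and 12√3·S/(a+b+c)² = √(1 − 6t + 4√2·t^{3/2}); that is, the upper boundary φ₊ of the Blaschke–Santaló diagram is attained for every admissible abscissa. -/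
/-!
Isosceles triangles whose base is at most their legs trace out the upper boundary. For legs `a` and
base `c`, put `x = (a - c) / (2 * a + c) ≥ 0`. The abscissa is then `2 * x ^ 2`, at which the
radicand of `φ₊` factors as `(1 - 2 * x) ^ 2 * (1 + 4 * x)`. Since `1 - 2 * x = 3 * c / (2 * a + c)`
and `1 + 4 * x = 3 * (2 * a - c) / (2 * a + c)`, this is the square of the ordinate. Perimeter `3`
gives the sides `1 + x, 1 + x, 1 - 2 * x`, and `x` runs through `[0, 1 / 2]` exactly when
`2 * x ^ 2` does.
-/

/-- The product in Heron's formula, that is, `16 * S ^ 2` for a triangle of area `S`. -/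
def heronProduct (a b c : ℝ) : ℝ :=
  (a + b + c) * (-a + b + c) * (a - b + c) * (a + b - c)

/-- The area of the triangle with sides `a`, `b`, `c`, given by Heron's formula; it is `0` when
`heronProduct a b c` is negative. -/
noncomputable def heronArea (a b c : ℝ) : ℝ :=
  √(heronProduct a b c) / 4

/-- The abscissa `Q / (a + b + c) ^ 2` of a triangle in the Blaschke–Santaló diagram, a
scale-invariant measure of its deviation from the equilateral triangle. -/
noncomputable def normalizedDispersion (a b c : ℝ) : ℝ :=
  ((a - b) ^ 2 + (b - c) ^ 2 + (c - a) ^ 2) / (a + b + c) ^ 2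

/-- The ordinate of a triangle in the Blaschke–Santaló diagram: its area divided by that of the
equilateral triangle of the same perimeter. -/
noncomputable def normalizedArea (a b c : ℝ) : ℝ :=
  12 * √3 * heronArea a b c / (a + b + c) ^ 2

/-- The upper boundary `φ₊` of the Blaschke–Santaló diagram. -/
noncomputable def upperBoundary (t : ℝ) : ℝ :=
  √(1 - 6 * t + 4 * √2 * t ^ ((3 : ℝ) / 2))

theorem heronProduct_nonneg {a b c : ℝ} (ha : a ≤ b + c) (hb : b ≤ c + a) (hc : c ≤ a + b) :
    0 ≤ heronProduct a b c := by
  unfold heronProduct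
  apply_rules [mul_nonneg] <;> linarith

theorem heronArea_nonneg (a b c : ℝ) : 0 ≤ heronArea a b c := by
  unfold heronArea
  positivity

theorem sixteen_mul_heronArea_sq {a b c : ℝ} (h : 0 ≤ heronProduct a b c) :
    16 * heronArea a b c ^ 2 = heronProduct a b c := by
  rw [heronArea, div_pow, Real.sq_sqrt h]
  ring

theorem normalizedArea_eq_sqrt (a b c : ℝ) :
    normalizedArea a b c = √(27 * heronProduct a b c / (a + b + c) ^ 4) := by
  have hperimeter : √((a + b + c) ^ 4) = (a + b + c) ^ 2 := by
    rw [show (a + b + c) ^ 4 = ((a + b + c) ^ 2) ^ 2 by ring, Real.sqrt_sq (sq_nonneg _)]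
  have hsqrt : √27 = 3 * √3 := by
    rw [show (27 : ℝ) = 3 ^ 2 * 3 by norm_num, Real.sqrt_mul (by norm_num),
      Real.sqrt_sq (by norm_num)]
  rw [Real.sqrt_div' _ (by positivity), Real.sqrt_mul (by norm_num), hperimeter, hsqrt,
    normalizedArea, heronArea]
  ring

theorem rpow_three_halves {y : ℝ} (hy : 0 ≤ y) : y ^ ((3 : ℝ) / 2) = y * √y := by
  rw [show (3 : ℝ) / 2 = 1 + 1 / 2 by norm_num, Real.rpow_one_add' hy (by norm_num),
    ← Real.sqrt_eq_rpow]

theorem upperBoundary_two_mul_sq {x : ℝ} (hx : 0 ≤ x) :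
    upperBoundary (2 * x ^ 2) = √((1 - 2 * x) ^ 2 * (1 + 4 * x)) := by
  have hpow : (2 * x ^ 2) ^ ((3 : ℝ) / 2) = 2 * x ^ 2 * (√2 * x) := by
    rw [rpow_three_halves (by positivity), Real.sqrt_mul zero_le_two, Real.sqrt_sq hx]
  have htwo : √2 ^ 2 = (2 : ℝ) := Real.sq_sqrt zero_le_two
  rw [upperBoundary, hpow]
  congr 1
  linear_combination 8 * x ^ 3 * htwo

theorem normalizedDispersion_isosceles (a c : ℝ) :
    normalizedDispersion a a c = 2 * ((a - c) / (2 * a + c)) ^ 2 := by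
  rw [normalizedDispersion, ← two_mul, div_pow]
  ring

theorem normalizedArea_isosceles_eq_upperBoundary {a c : ℝ}
    (hperimeter : 0 < 2 * a + c) (hca : c ≤ a) :
    normalizedArea a a c = upperBoundary (normalizedDispersion a a c) := by
  have hx : 0 ≤ (a - c) / (2 * a + c) := div_nonneg (sub_nonneg.2 hca) hperimeter.le
  rw [normalizedDispersion_isosceles, upperBoundary_two_mul_sq hx, normalizedArea_eq_sqrt,
    heronProduct, ← two_mul]
  congr 1
  field_simp
  ring

theorem exists_isosceles_normalizedDispersion_eq {t : ℝ} (ht0 : 0 ≤ t) (ht1 : t ≤ 1 / 2) :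
    ∃ a c : ℝ, 0 < a ∧ 0 ≤ c ∧ c ≤ a ∧ normalizedDispersion a a c = t := by
  have hx0 : 0 ≤ √(t / 2) := Real.sqrt_nonneg _
  have hx1 : √(t / 2) ≤ 1 / 2 := Real.sqrt_le_iff.2 ⟨by norm_num, by linarith⟩
  have hsq : √(t / 2) ^ 2 = t / 2 := Real.sq_sqrt (by linarith)
  refine ⟨1 + √(t / 2), 1 - 2 * √(t / 2), by linarith, by linarith, by linarith, ?_⟩
  rw [normalizedDispersion_isosceles]
  linear_combination 2 * hsq

/-- The upper boundary `φ₊(t) = √(1 − 6t + 4√2·t^{3/2})` of the Blaschke–Santaló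
diagram is attained: for every `t ∈ [0, 1/2]` there is a (possibly degenerate)
triangle with `Q/(a+b+c)² = t` and `12√3·S/(a+b+c)² = φ₊(t)`. -/
theorem upper_boundary_attained (t : ℝ) (ht0 : 0 ≤ t) (ht1 : t ≤ 1 / 2) :
    ∃ a b c S : ℝ, 0 ≤ a ∧ 0 ≤ b ∧ 0 ≤ c ∧
      a ≤ b + c ∧ b ≤ c + a ∧ c ≤ a + b ∧
      ¬ (a = 0 ∧ b = 0 ∧ c = 0) ∧ 0 ≤ S ∧
      16 * S ^ 2 = (a + b + c) * (-a + b + c) * (a - b + c) * (a + b - c) ∧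
      ((a - b) ^ 2 + (b - c) ^ 2 + (c - a) ^ 2) / (a + b + c) ^ 2 = t ∧
      12 * Real.sqrt 3 * S / (a + b + c) ^ 2 =
        Real.sqrt (1 - 6 * t + 4 * Real.sqrt 2 * t ^ ((3 : ℝ) / 2)) := by
  obtain ⟨a, c, ha, hc, hca, hdispersion⟩ := exists_isosceles_normalizedDispersion_eq ht0 ht1
  have hleft : a ≤ a + c := by linarith
  have hright : a ≤ c + a := by linarith
  have hbase : c ≤ a + a := by linarith
  have harea : normalizedArea a a c = upperBoundary t :=
    hdispersion ▸ normalizedArea_isosceles_eq_upperBoundary (by linarith) hca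
  exact ⟨a, a, c, heronArea a a c, ha.le, ha.le, hc, hleft, hright, hbase,
    fun hzero => ha.ne' hzero.1, heronArea_nonneg a a c,
    sixteen_mul_heronArea_sq (heronProduct_nonneg hleft hright hbase), hdispersion, harea⟩
end

section
/- For every t ∈ [0, 1/8] there exists a (possibly degenerate) triangle with side lengths a, b, c (not all zero) such that Q/(a+b+c)² = t and 12√3·S/(a+b+c)² = √(1 − 6t − 4√2·t^{3/2}); that is, the lower boundary φ₋ of the Blaschke–Santaló diagram is attained for every abscissa in [0, 1/8]. -/
/-!
The lower boundary is traced by isosceles triangles whose base is at least as long as the legs.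
For legs `a`, base `b` and `u = (b - a) / (2 * a + b)`, the abscissa is `2 * u ^ 2` and the square
of the ordinate is `(1 + 2 * u) ^ 2 * (1 - 4 * u) = 1 - 12 * u ^ 2 - 16 * u ^ 3`, which for `0 ≤ u`
is `φ₋ (2 * u ^ 2) ^ 2`. The triangles run from the equilateral one (`u = 0`, `t = 0`) to the
degenerate one with `b = 2 * a` (`u = 1 / 4`, `t = 1 / 8`).
-/

namespace BlaschkeSantalo

/-- The area of the triangle with side lengths `a`, `b`, `c`, by Heron's formula; when the product
under the root is negative, no such triangle exists and the value is `0`. -/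
noncomputable def heronArea (a b c : ℝ) : ℝ :=
  √((a + b + c) * (-a + b + c) * (a - b + c) * (a + b - c)) / 4

/-- The abscissa `Q / (a + b + c) ^ 2` of a triangle in the Blaschke–Santaló diagram, a
scale-invariant measure of its deviation from the equilateral triangle. -/
noncomputable def sideSpread (a b c : ℝ) : ℝ :=
  ((a - b) ^ 2 + (b - c) ^ 2 + (c - a) ^ 2) / (a + b + c) ^ 2

/-- The ordinate `12 * √3 * S / (a + b + c) ^ 2` of a triangle in the Blaschke–Santaló diagram: its
isoperimetric ratio, normalized to be `1` for the equilateral triangle. -/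
noncomputable def areaRatio (a b c : ℝ) : ℝ :=
  12 * √3 * heronArea a b c / (a + b + c) ^ 2

/-- The function `φ₋` bounding the Blaschke–Santaló diagram from below. -/
noncomputable def lowerBoundary (t : ℝ) : ℝ :=
  √(1 - 6 * t - 4 * √2 * t ^ ((3 : ℝ) / 2))

variable {a b c t u : ℝ}

theorem heronArea_nonneg (a b c : ℝ) : 0 ≤ heronArea a b c :=
  div_nonneg (Real.sqrt_nonneg _) (by norm_num)

theorem sixteen_mul_heronArea_sq (ha : a ≤ b + c) (hb : b ≤ c + a) (hc : c ≤ a + b) :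
    16 * heronArea a b c ^ 2 = (a + b + c) * (-a + b + c) * (a - b + c) * (a + b - c) := by
  have product_nonneg : 0 ≤ (a + b + c) * (-a + b + c) * (a - b + c) * (a + b - c) := by
    refine mul_nonneg (mul_nonneg (mul_nonneg ?_ ?_) ?_) ?_ <;> linarith
  rw [heronArea, div_pow, Real.sq_sqrt product_nonneg]
  ring

theorem areaRatio_eq_sqrt (hp : 0 < a + b + c) :
    areaRatio a b c =
      √(27 * ((-a + b + c) * (a - b + c) * (a + b - c)) / (a + b + c) ^ 3) := by
  set p := a + b + c
  set d := (-a + b + c) * (a - b + c) * (a + b - c) with hd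
  have heron : heronArea a b c = √(p * d) / 4 := by
    rw [heronArea, hd, ← mul_assoc, ← mul_assoc]
  calc areaRatio a b c
      = 12 * √3 * (√(p * d) / 4) / p ^ 2 := by rw [areaRatio, heron]
    _ = 3 * (√3 * √(p * d)) / p ^ 2 := by ring
    _ = √(3 ^ 2 * (3 * (p * d)) / (p ^ 2) ^ 2) := by
      rw [Real.sqrt_div' _ (by positivity), Real.sqrt_sq (by positivity),
        Real.sqrt_mul (by positivity : (0 : ℝ) ≤ 3 ^ 2), Real.sqrt_sq (by norm_num),
        Real.sqrt_mul (by norm_num : (0 : ℝ) ≤ 3)]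
    _ = √(27 * d / p ^ 3) := by
      congr 1
      field_simp
      ring

theorem two_mul_sq_rpow_three_halves (hu : 0 ≤ u) :
    (2 * u ^ 2) ^ ((3 : ℝ) / 2) = 2 * √2 * u ^ 3 := by
  rw [Real.rpow_div_two_eq_sqrt _ (by positivity), Real.sqrt_mul (by norm_num), Real.sqrt_sq hu]
  norm_cast
  rw [mul_pow, pow_succ, Real.sq_sqrt (by norm_num)]

theorem lowerBoundary_two_mul_sq (hu : 0 ≤ u) :
    lowerBoundary (2 * u ^ 2) = √((1 + 2 * u) ^ 2 * (1 - 4 * u)) := by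
  have sq_sqrt_two : √2 ^ 2 = (2 : ℝ) := Real.sq_sqrt (by norm_num)
  rw [lowerBoundary, two_mul_sq_rpow_three_halves hu]
  congr 1
  linear_combination -8 * u ^ 3 * sq_sqrt_two

theorem sideSpread_isosceles (a b : ℝ) :
    sideSpread a a b = 2 * ((b - a) / (a + a + b)) ^ 2 := by
  rw [sideSpread, div_pow]
  ring

theorem areaRatio_isosceles (hp : 0 < a + a + b) :
    areaRatio a a b =
      √((1 + 2 * ((b - a) / (a + a + b))) ^ 2 * (1 - 4 * ((b - a) / (a + a + b)))) := by
  have base_ratio : 1 + 2 * ((b - a) / (a + a + b)) = 3 * b / (a + a + b) := by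
    rw [eq_div_iff hp.ne', add_mul, mul_assoc, div_mul_cancel₀ _ hp.ne']
    ring
  have defect_ratio : 1 - 4 * ((b - a) / (a + a + b)) = 3 * (a + a - b) / (a + a + b) := by
    rw [eq_div_iff hp.ne', sub_mul, mul_assoc, div_mul_cancel₀ _ hp.ne']
    ring
  rw [areaRatio_eq_sqrt hp, base_ratio, defect_ratio, div_pow, div_mul_div_comm, ← pow_succ]
  congr 2
  ring

theorem areaRatio_isosceles_eq_lowerBoundary (hp : 0 < a + a + b) (hab : a ≤ b) :
    areaRatio a a b = lowerBoundary (sideSpread a a b) := by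
  rw [sideSpread_isosceles, lowerBoundary_two_mul_sq (div_nonneg (sub_nonneg.2 hab) hp.le),
    areaRatio_isosceles hp]

theorem exists_isosceles_sideSpread_eq (ht0 : 0 ≤ t) (ht1 : t ≤ 1 / 8) :
    ∃ a b : ℝ, 0 < a ∧ a ≤ b ∧ b ≤ 2 * a ∧ sideSpread a a b = t := by
  have u_nonneg : 0 ≤ √(t / 2) := Real.sqrt_nonneg _
  have u_le : √(t / 2) ≤ 1 / 4 := Real.sqrt_le_iff.2 ⟨by norm_num, by linarith⟩
  -- Perimeter `3`, for which `(b - a) / (2 * a + b) = √(t / 2)`.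
  refine ⟨1 - √(t / 2), 1 + 2 * √(t / 2), by linarith, by linarith, by linarith, ?_⟩
  calc sideSpread (1 - √(t / 2)) (1 - √(t / 2)) (1 + 2 * √(t / 2))
      = 2 * √(t / 2) ^ 2 := by rw [sideSpread_isosceles]; ring
    _ = t := by rw [Real.sq_sqrt (by positivity)]; ring

end BlaschkeSantalo

/-- The lower boundary `φ₋(t) = √(1 − 6t − 4√2·t^{3/2})` of the Blaschke–Santaló
diagram is attained: for every `t ∈ [0, 1/8]` there is a (possibly degenerate)
triangle with `Q/(a+b+c)² = t` and `12√3·S/(a+b+c)² = φ₋(t)`. -/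
theorem lower_boundary_attained (t : ℝ) (ht0 : 0 ≤ t) (ht1 : t ≤ 1 / 8) :
    ∃ a b c S : ℝ, 0 ≤ a ∧ 0 ≤ b ∧ 0 ≤ c ∧
      a ≤ b + c ∧ b ≤ c + a ∧ c ≤ a + b ∧
      ¬ (a = 0 ∧ b = 0 ∧ c = 0) ∧ 0 ≤ S ∧
      16 * S ^ 2 = (a + b + c) * (-a + b + c) * (a - b + c) * (a + b - c) ∧
      ((a - b) ^ 2 + (b - c) ^ 2 + (c - a) ^ 2) / (a + b + c) ^ 2 = t ∧
      12 * Real.sqrt 3 * S / (a + b + c) ^ 2 =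
        Real.sqrt (1 - 6 * t - 4 * Real.sqrt 2 * t ^ ((3 : ℝ) / 2)) := by
  obtain ⟨a, b, ha, hab, hba, rfl⟩ := BlaschkeSantalo.exists_isosceles_sideSpread_eq ht0 ht1
  have legs_triangle : a ≤ a + b := by linarith
  have base_triangle : b ≤ a + a := by linarith
  exact ⟨a, a, b, BlaschkeSantalo.heronArea a a b, ha.le, ha.le, ha.le.trans hab,
    legs_triangle, by linarith, base_triangle, fun h => ha.ne' h.1,
    BlaschkeSantalo.heronArea_nonneg a a b,
    BlaschkeSantalo.sixteen_mul_heronArea_sq legs_triangle (by linarith) base_triangle,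
    rfl, BlaschkeSantalo.areaRatio_isosceles_eq_lowerBoundary (by linarith) hab⟩
end

section
/- For every t ∈ [0, 1/8] and every s with φ₋(t) ≤ s ≤ φ₊(t), there exists a (possibly degenerate) triangle with side lengths a, b, c (not all zero) such that Q/(a+b+c)² = t and 12√3·S/(a+b+c)² = s; i.e. the vertical slice of the Blaschke–Santaló diagram at abscissa t ∈ [0, 1/8] is exactly the interval [φ₋(t), φ₊(t)]. -/
/-!
For a triangle of perimeter `3`, the numbers `u = -a + b + c`, `v = a - b + c`, `w = a + b - c` have
elementary symmetric functions `3`, `3 - 6 * t` and `s ^ 2`, where `(t, s)` is the point of the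
diagram represented by the triangle. So the task is to find a monic cubic with these coefficients
and three nonnegative roots. Centring the roots at their mean `1` gives a depressed cubic, and
Viète's trigonometric formula provides three real roots as soon as
`|s ^ 2 - (1 - 6 * t)| ≤ 4 * √2 * t ^ (3 / 2)`. The roots are nonnegative because their elementary
symmetric functions are, which is where `t ≤ 1 / 2` enters.
-/

open Real

/-- The Blaschke–Santaló diagram of triangles: the points `(Q / (a+b+c)², 12√3·S / (a+b+c)²)`
represented by the possibly degenerate triangles with sides `a, b, c` and area `S`. The area is
specified by Heron's formula, and the degenerate triangle reduced to a point is excluded. -/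
def triangleDiagram : Set (ℝ × ℝ) :=
  {p | ∃ a b c S : ℝ, 0 ≤ a ∧ 0 ≤ b ∧ 0 ≤ c ∧
    a ≤ b + c ∧ b ≤ c + a ∧ c ≤ a + b ∧
    ¬ (a = 0 ∧ b = 0 ∧ c = 0) ∧ 0 ≤ S ∧
    16 * S ^ 2 = (a + b + c) * (-a + b + c) * (a - b + c) * (a + b - c) ∧
    ((a - b) ^ 2 + (b - c) ^ 2 + (c - a) ^ 2) / (a + b + c) ^ 2 = p.1 ∧
    12 * √3 * S / (a + b + c) ^ 2 = p.2}

theorem mem_triangleDiagram_of_ravi {u v w s : ℝ} (hu : 0 ≤ u) (hv : 0 ≤ v) (hw : 0 ≤ w)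
    (hp : 0 < u + v + w) (hs : 0 ≤ s) (h : s ^ 2 * (u + v + w) ^ 3 = 27 * (u * v * w)) :
    (((u - v) ^ 2 + (v - w) ^ 2 + (w - u) ^ 2) / (2 * (u + v + w)) ^ 2, s) ∈ triangleDiagram := by
  have h3 : √3 ^ 2 = 3 := sq_sqrt (by norm_num)
  have perimeter : (v + w) / 2 + (w + u) / 2 + (u + v) / 2 = u + v + w := by ring
  refine ⟨(v + w) / 2, (w + u) / 2, (u + v) / 2, √3 * s * (u + v + w) ^ 2 / 36,
    by linarith, by linarith, by linarith, by linarith, by linarith, by linarith,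
    fun ⟨_, _, _⟩ ↦ by linarith, by positivity, ?_, ?_, ?_⟩
  · linear_combination (u + v + w) ^ 4 * s ^ 2 / 81 * h3 + (u + v + w) / 27 * h
  · rw [perimeter]
    field_simp
    ring
  · rw [perimeter]
    field_simp
    linear_combination 12 * s * h3

theorem nonneg_of_esymm_nonneg {R : Type*} [CommRing R] [LinearOrder R] [IsStrictOrderedRing R]
    {u v w : R} (h₁ : 0 ≤ u + v + w) (h₂ : 0 ≤ u * v + v * w + w * u) (h₃ : 0 ≤ u * v * w) :
    0 ≤ u ∧ 0 ≤ v ∧ 0 ≤ w := by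
  have first_nonneg {x y z : R} (h₁ : 0 ≤ x + y + z) (h₂ : 0 ≤ x * y + y * z + z * x)
      (h₃ : 0 ≤ x * y * z) : 0 ≤ x := by
    by_contra! hx
    have hyz : y * z ≤ 0 := nonpos_of_mul_nonneg_right (by rwa [← mul_assoc]) hx
    have hsum : x * (y + z) < 0 := mul_neg_of_neg_of_pos hx (by linarith)
    linarith
  exact ⟨first_nonneg h₁ h₂ h₃,
    first_nonneg (y := w) (z := u) (by linarith) (by linarith) (by linarith),
    first_nonneg (y := u) (z := v) (by linarith) (by linarith) (by linarith)⟩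

theorem exists_mul_cos_eq {m q : ℝ} (h : |q| ≤ m) : ∃ θ, m * cos θ = q := by
  have hm : 0 ≤ m := (abs_nonneg q).trans h
  have hratio : |q / m| ≤ 1 := by
    rw [abs_div, abs_of_nonneg hm]
    exact div_le_one_of_le₀ h hm
  obtain ⟨hlo, hhi⟩ := abs_le.mp hratio
  refine ⟨arccos (q / m), ?_⟩
  rw [cos_arccos hlo hhi]
  exact mul_div_cancel_of_imp' fun hm0 ↦ by simpa [hm0] using h

theorem exists_sum_eq_zero_sum_sq_eq_prod_eq {ρ q : ℝ} (h : |q| ≤ 2 * ρ ^ 3) :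
    ∃ x y z : ℝ, x + y + z = 0 ∧ x ^ 2 + y ^ 2 + z ^ 2 = 6 * ρ ^ 2 ∧ x * y * z = q := by
  have h3 : √3 ^ 2 = 3 := sq_sqrt (by norm_num)
  obtain ⟨φ, hφ⟩ := exists_mul_cos_eq h
  obtain ⟨θ, rfl⟩ : ∃ θ, φ = 3 * θ := ⟨φ / 3, by ring⟩
  have hθ : sin θ ^ 2 + cos θ ^ 2 = 1 := sin_sq_add_cos_sq θ
  refine ⟨2 * ρ * cos θ, -(2 * ρ * cos (θ + π / 3)), -(2 * ρ * cos (θ - π / 3)), ?_, ?_, ?_⟩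
  · simp only [cos_add, cos_sub, cos_pi_div_three, sin_pi_div_three]
    ring
  · simp only [cos_add, cos_sub, cos_pi_div_three, sin_pi_div_three]
    linear_combination 6 * ρ ^ 2 * hθ + 2 * ρ ^ 2 * sin θ ^ 2 * h3
  · rw [← hφ, cos_three_mul]
    simp only [cos_add, cos_sub, cos_pi_div_three, sin_pi_div_three]
    linear_combination -6 * ρ ^ 3 * cos θ * hθ - 2 * ρ ^ 3 * cos θ * sin θ ^ 2 * h3

theorem two_mul_sqrt_two_mul_pow_three {t : ℝ} (ht : 0 ≤ t) :
    2 * √(2 * t) ^ 3 = 4 * √2 * t ^ ((3 : ℝ) / 2) := by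
  rw [rpow_div_two_eq_sqrt 3 ht, rpow_ofNat, sqrt_mul zero_le_two]
  linear_combination 2 * √2 * √t ^ 3 * sq_sqrt (zero_le_two (α := ℝ))

theorem abs_sq_sub_le_of_mem_Icc_sqrt {s x d : ℝ} (hxd : 0 ≤ x + d)
    (h : s ∈ Set.Icc √(x - d) √(x + d)) : |s ^ 2 - x| ≤ d := by
  obtain ⟨hs, hlo⟩ := sqrt_le_iff.mp h.1
  have hhi : s ^ 2 ≤ x + d := (le_sqrt hs hxd).mp h.2
  exact abs_le.mpr ⟨by linarith, by linarith⟩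

theorem vertical_slice_small_X_general {t s : ℝ} (ht0 : 0 ≤ t) (ht1 : t ≤ 1 / 2) (hs : 0 ≤ s)
    (h : |s ^ 2 - (1 - 6 * t)| ≤ 4 * √2 * t ^ ((3 : ℝ) / 2)) : (t, s) ∈ triangleDiagram := by
  rw [← two_mul_sqrt_two_mul_pow_three ht0] at h
  obtain ⟨x, y, z, hsum, hsq, hprod⟩ := exists_sum_eq_zero_sum_sq_eq_prod_eq h
  rw [sq_sqrt (by positivity)] at hsq
  obtain ⟨u, v, w, rfl, rfl, rfl⟩ : ∃ u v w, u - 1 = x ∧ v - 1 = y ∧ w - 1 = z :=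
    ⟨x + 1, y + 1, z + 1, by ring, by ring, by ring⟩
  have e₁ : u + v + w = 3 := by linear_combination hsum
  have e₂ : u * v + v * w + w * u = 3 - 6 * t := by
    linear_combination (u + v + w + 1) / 2 * e₁ - hsq / 2
  have e₃ : u * v * w = s ^ 2 := by linear_combination hprod + e₂ - e₁
  obtain ⟨hu, hv, hw⟩ : 0 ≤ u ∧ 0 ≤ v ∧ 0 ≤ w :=
    nonneg_of_esymm_nonneg (by linarith) (by linarith) (e₃ ▸ sq_nonneg s)
  convert mem_triangleDiagram_of_ravi hu hv hw (by linarith) hs (by rw [e₁, e₃]; ring) using 2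
  rw [e₁]
  linear_combination (-(u + v + w) - 3) / 18 * e₁ + e₂ / 6

/-- For `t ∈ [0, 1/8]`, the vertical slice of the Blaschke–Santaló diagram at
abscissa `t` fills the interval `[φ₋(t), φ₊(t)]`: for every `s` with
`φ₋(t) ≤ s ≤ φ₊(t)` there exists a (possibly degenerate) triangle with
`Q/(a+b+c)² = t` and `12√3·S/(a+b+c)² = s`. -/
theorem vertical_slice_small_X (t s : ℝ) (ht0 : 0 ≤ t) (ht1 : t ≤ 1 / 8)
    (hs1 : Real.sqrt (1 - 6 * t - 4 * Real.sqrt 2 * t ^ ((3 : ℝ) / 2)) ≤ s)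
    (hs2 : s ≤ Real.sqrt (1 - 6 * t + 4 * Real.sqrt 2 * t ^ ((3 : ℝ) / 2))) :
    ∃ a b c S : ℝ, 0 ≤ a ∧ 0 ≤ b ∧ 0 ≤ c ∧
      a ≤ b + c ∧ b ≤ c + a ∧ c ≤ a + b ∧
      ¬ (a = 0 ∧ b = 0 ∧ c = 0) ∧ 0 ≤ S ∧
      16 * S ^ 2 = (a + b + c) * (-a + b + c) * (a - b + c) * (a + b - c) ∧
      ((a - b) ^ 2 + (b - c) ^ 2 + (c - a) ^ 2) / (a + b + c) ^ 2 = t ∧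
      12 * Real.sqrt 3 * S / (a + b + c) ^ 2 = s := by
  exact vertical_slice_small_X_general ht0 (by linarith) ((sqrt_nonneg _).trans hs1)
    (abs_sq_sub_le_of_mem_Icc_sqrt (add_nonneg (by linarith) (by positivity)) ⟨hs1, hs2⟩)
end

section
/- For any (possibly degenerate) triangle with a + b + c > 0, setting X := Q/(a+b+c)² and Y := 12√3·S/(a+b+c)², one has Y ≤ φ₊(X) = √(1 − 6X + 4√2·X^{3/2}); moreover, if X ≤ 1/8 then additionally Y ≥ φ₋(X) = √(1 − 6X − 4√2·X^{3/2}). -/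
/-!
Put `p = a + b + c` and `D = (2 * a - b - c) * (2 * b - c - a) * (2 * c - a - b)`. The three factors
of `D` add up to zero, and `3 * (p - 2 * a) = p - 2 * (2 * a - b - c)`, so expanding
`27 * ((p - 2 * a) * (p - 2 * b) * (p - 2 * c))` in powers of `p` gives no `p ^ 2` term, and Heron's
formula becomes `Y ^ 2 = 1 - 6 * X - 8 * D / p ^ 3`. The factors of `D` are the roots of a depressed
real cubic, whose discriminant is nonnegative; this says `2 * D ^ 2 ≤ Q ^ 3`, that is,
`|8 * D / p ^ 3| ≤ 4 * √2 * X ^ (3 / 2)`.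
-/

section Polynomial

variable {R : Type*} [CommRing R]

/-- The quantity `Q`, which measures how far the triangle with sides `a`, `b`, `c` is from
being equilateral. -/
def sqDiffSum (a b c : R) : R :=
  (a - b) ^ 2 + (b - c) ^ 2 + (c - a) ^ 2

/-- The product of the deviations of `a`, `b`, `c` from their mean, scaled by `3 ^ 3` so that it
makes sense without division. -/
def deviationProd (a b c : R) : R :=
  (2 * a - b - c) * (2 * b - c - a) * (2 * c - a - b)

theorem heron_factors_mul_eq (a b c : R) :
    27 * ((-a + b + c) * (a - b + c) * (a + b - c)) =
      (a + b + c) ^ 3 - 6 * (a + b + c) * sqDiffSum a b c - 8 * deviationProd a b c := by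
  simp only [sqDiffSum, deviationProd]
  ring

theorem sqDiffSum_pow_three_eq (a b c : R) :
    sqDiffSum a b c ^ 3 =
      2 * deviationProd a b c ^ 2 + 54 * ((a - b) * (b - c) * (c - a)) ^ 2 := by
  simp only [sqDiffSum, deviationProd]
  ring

variable [LinearOrder R] [IsStrictOrderedRing R]

theorem sqDiffSum_nonneg (a b c : R) : 0 ≤ sqDiffSum a b c := by
  unfold sqDiffSum
  positivity

theorem two_mul_deviationProd_sq_le (a b c : R) :
    2 * deviationProd a b c ^ 2 ≤ sqDiffSum a b c ^ 3 := by
  rw [sqDiffSum_pow_three_eq]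
  exact le_add_of_nonneg_right (by positivity)

end Polynomial

theorem abs_le_mul_rpow_three_halves {x t k : ℝ} (ht : 0 ≤ t) (hk : 0 ≤ k)
    (h : x ^ 2 ≤ k ^ 2 * t ^ 3) : |x| ≤ k * t ^ ((3 : ℝ) / 2) := by
  refine abs_le_of_sq_le_sq (h.trans_eq ?_) (by positivity)
  rw [mul_pow, ← Real.rpow_mul_natCast ht, ← Real.rpow_natCast t 3]
  norm_num

theorem normalized_area_sq_eq {a b c S : ℝ} (hsum : a + b + c ≠ 0)
    (heron : 16 * S ^ 2 = (a + b + c) * (-a + b + c) * (a - b + c) * (a + b - c)) :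
    (12 * √3 * S / (a + b + c) ^ 2) ^ 2 =
      1 - 6 * (sqDiffSum a b c / (a + b + c) ^ 2) - 8 * deviationProd a b c / (a + b + c) ^ 3 := by
  have sqrt_three_sq : √3 ^ 2 = 3 := Real.sq_sqrt (by norm_num)
  calc (12 * √3 * S / (a + b + c) ^ 2) ^ 2
    _ = 27 * (16 * S ^ 2) / (a + b + c) ^ 4 := by
      rw [div_pow, mul_pow, mul_pow, sqrt_three_sq]; ring
    _ = 27 * ((-a + b + c) * (a - b + c) * (a + b - c)) / (a + b + c) ^ 3 := by
      rw [heron]; field_simp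
    _ = _ := by rw [heron_factors_mul_eq]; field_simp

theorem abs_deviationProd_div_le (a b c : ℝ) :
    |8 * deviationProd a b c / (a + b + c) ^ 3| ≤
      4 * √2 * (sqDiffSum a b c / (a + b + c) ^ 2) ^ ((3 : ℝ) / 2) := by
  have hQ := sqDiffSum_nonneg a b c
  have sqrt_two_sq : √2 ^ 2 = 2 := Real.sq_sqrt (by norm_num)
  refine abs_le_mul_rpow_three_halves (by positivity) (by positivity) ?_
  calc (8 * deviationProd a b c / (a + b + c) ^ 3) ^ 2
    _ = 32 * (2 * deviationProd a b c ^ 2) / (a + b + c) ^ 6 := by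
      rw [div_pow, ← pow_mul]; ring
    _ ≤ 32 * sqDiffSum a b c ^ 3 / (a + b + c) ^ 6 := by
      gcongr 32 * ?_ / _
      exact two_mul_deviationProd_sq_le a b c
    _ = (4 * √2) ^ 2 * (sqDiffSum a b c / (a + b + c) ^ 2) ^ 3 := by
      rw [mul_pow, sqrt_two_sq, div_pow, ← pow_mul]; ring

theorem diagram_bounds_general {a b c S Q X Y : ℝ} (hsum : a + b + c ≠ 0) (hS : 0 ≤ S)
    (heron : 16 * S ^ 2 = (a + b + c) * (-a + b + c) * (a - b + c) * (a + b - c))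
    (hQ : Q = (a - b) ^ 2 + (b - c) ^ 2 + (c - a) ^ 2)
    (hX : X = Q / (a + b + c) ^ 2)
    (hY : Y = 12 * √3 * S / (a + b + c) ^ 2) :
    Y ≤ √(1 - 6 * X + 4 * √2 * X ^ ((3 : ℝ) / 2)) ∧
      (X ≤ 1 / 8 → √(1 - 6 * X - 4 * √2 * X ^ ((3 : ℝ) / 2)) ≤ Y) := by
  have hX' : X = sqDiffSum a b c / (a + b + c) ^ 2 := by rw [hX, hQ, sqDiffSum]
  have hY_nonneg : 0 ≤ Y := by rw [hY]; positivity
  have hY_sq : Y ^ 2 = 1 - 6 * X - 8 * deviationProd a b c / (a + b + c) ^ 3 := by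
    rw [hY, hX', normalized_area_sq_eq hsum heron]
  have hdev : |8 * deviationProd a b c / (a + b + c) ^ 3| ≤ 4 * √2 * X ^ ((3 : ℝ) / 2) := by
    rw [hX']
    exact abs_deviationProd_div_le a b c
  obtain ⟨hdev_lower, hdev_upper⟩ := abs_le.mp hdev
  exact ⟨Real.le_sqrt_of_sq_le (by linarith),
    fun _ ↦ Real.sqrt_le_iff.mpr ⟨hY_nonneg, by linarith⟩⟩

/-- For any (possibly degenerate) triangle with `a + b + c > 0`, setting
`X = Q/(a+b+c)²` and `Y = 12√3·S/(a+b+c)²`, one has `Y ≤ φ₊(X)`; moreover if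
`X ≤ 1/8` then additionally `Y ≥ φ₋(X)`. -/
theorem diagram_bounds (a b c S Q X Y : ℝ)
    (ha : 0 ≤ a) (hb : 0 ≤ b) (hc : 0 ≤ c)
    (hab : a ≤ b + c) (hbc : b ≤ c + a) (hca : c ≤ a + b)
    (hpos : 0 < a + b + c) (hS : 0 ≤ S)
    (heron : 16 * S ^ 2 = (a + b + c) * (-a + b + c) * (a - b + c) * (a + b - c))
    (hQ : Q = (a - b) ^ 2 + (b - c) ^ 2 + (c - a) ^ 2)
    (hX : X = Q / (a + b + c) ^ 2)
    (hY : Y = 12 * Real.sqrt 3 * S / (a + b + c) ^ 2) :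
    Y ≤ Real.sqrt (1 - 6 * X + 4 * Real.sqrt 2 * X ^ ((3 : ℝ) / 2)) ∧
      (X ≤ 1 / 8 →
        Real.sqrt (1 - 6 * X - 4 * Real.sqrt 2 * X ^ ((3 : ℝ) / 2)) ≤ Y) :=
  diagram_bounds_general hpos.ne' hS heron hQ hX hY
end

section
/- Fix X ∈ [0, 1/8] and z ∈ ℝ. There exist x, y ≥ 0 with x + y + z = 1 and (x−y)² + (y−z)² + (z−x)² = 4X if and only if z ∈ [(1 − 2√(2X))/3, (1 + 2√(2X))/3]. -/
/-!
For a fixed sum `s = x + y + z`, twice the sum of the squared differences is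
`(3z - s)² + 3(x - y)²`, so the two constraints prescribe `x + y` and `(x - y)²`. Real `x, y` exist
exactly when the prescribed square is nonnegative, which confines `z` to an interval centred at
`s / 3`. They are nonnegative exactly when moreover `|x - y| ≤ x + y`; this reads
`2Q ≤ s² + 3(s - 2z)²` for a prescribed sum of squares `Q`, which is automatic once `2Q ≤ s²`.
For `s = 1` and `Q = 4X` the threshold is `X ≤ 1/8`.
-/

theorem two_mul_sum_sq_sub {R : Type*} [CommRing R] (x y z : R) :
    2 * ((x - y) ^ 2 + (y - z) ^ 2 + (z - x) ^ 2) =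
      (3 * z - (x + y + z)) ^ 2 + 3 * (x - y) ^ 2 := by
  ring

theorem exists_nonneg_add_eq_sub_sq_eq_iff {t q : ℝ} :
    (∃ x y : ℝ, 0 ≤ x ∧ 0 ≤ y ∧ x + y = t ∧ (x - y) ^ 2 = q) ↔ 0 ≤ t ∧ 0 ≤ q ∧ q ≤ t ^ 2 := by
  constructor
  · rintro ⟨x, y, hx, hy, rfl, rfl⟩
    refine ⟨add_nonneg hx hy, sq_nonneg _, ?_⟩
    calc (x - y) ^ 2 ≤ (x - y) ^ 2 + 4 * (x * y) := le_add_of_nonneg_right (by positivity)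
      _ = (x + y) ^ 2 := by ring
  · rintro ⟨ht, hq, hqt⟩
    have sqrt_le : √q ≤ t := Real.sqrt_le_iff.2 ⟨ht, hqt⟩
    have sqrt_nonneg : 0 ≤ √q := Real.sqrt_nonneg q
    refine ⟨(t + √q) / 2, (t - √q) / 2, by linarith, by linarith, by ring, ?_⟩
    calc ((t + √q) / 2 - (t - √q) / 2) ^ 2 = √q ^ 2 := by ring
      _ = q := Real.sq_sqrt hq

theorem exists_nonneg_sum_eq_sum_sq_sub_eq_iff {s z Q : ℝ} :
    (∃ x y : ℝ, 0 ≤ x ∧ 0 ≤ y ∧ x + y + z = s ∧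
        (x - y) ^ 2 + (y - z) ^ 2 + (z - x) ^ 2 = Q) ↔
      z ≤ s ∧ (3 * z - s) ^ 2 ≤ 2 * Q ∧ 2 * Q ≤ s ^ 2 + 3 * (s - 2 * z) ^ 2 := by
  have constraints_iff (x y : ℝ) :
      (x + y + z = s ∧ (x - y) ^ 2 + (y - z) ^ 2 + (z - x) ^ 2 = Q) ↔
        x + y = s - z ∧ (x - y) ^ 2 = (2 * Q - (3 * z - s) ^ 2) / 3 := by
    rw [eq_sub_iff_add_eq]
    refine and_congr_right fun hsum => ?_
    have hsq := two_mul_sum_sq_sub x y z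
    rw [hsum] at hsq
    constructor <;> intro h <;> linarith
  have sq_le_iff : (2 * Q - (3 * z - s) ^ 2) / 3 ≤ (s - z) ^ 2 ↔
      2 * Q ≤ s ^ 2 + 3 * (s - 2 * z) ^ 2 := by
    have hsq : (3 * z - s) ^ 2 + 3 * (s - z) ^ 2 = s ^ 2 + 3 * (s - 2 * z) ^ 2 := by ring
    rw [div_le_iff₀' zero_lt_three, sub_le_iff_le_add', hsq]
  simp only [constraints_iff]
  rw [exists_nonneg_add_eq_sub_sq_eq_iff, sub_nonneg, sq_le_iff,
    le_div_iff₀ zero_lt_three, zero_mul, sub_nonneg]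

theorem exists_nonneg_sum_eq_sum_sq_sub_eq_iff_of_two_mul_le_sq {s z Q : ℝ} (hs : 0 ≤ s)
    (hQ : 2 * Q ≤ s ^ 2) :
    (∃ x y : ℝ, 0 ≤ x ∧ 0 ≤ y ∧ x + y + z = s ∧
        (x - y) ^ 2 + (y - z) ^ 2 + (z - x) ^ 2 = Q) ↔
      (3 * z - s) ^ 2 ≤ 2 * Q := by
  rw [exists_nonneg_sum_eq_sum_sq_sub_eq_iff]
  refine ⟨fun h => h.2.1, fun hz => ⟨?_, hz, ?_⟩⟩
  · have : 3 * z - s ≤ s := le_of_abs_le (abs_le_of_sq_le_sq (hz.trans hQ) hs)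
    linarith
  · exact hQ.trans (le_add_of_nonneg_right (by positivity))

/-- For `X ∈ [0, 1/8]` and `z ∈ ℝ`, there exist `x, y ≥ 0` with `x + y + z = 1`
and `(x−y)² + (y−z)² + (z−x)² = 4X` if and only if
`z ∈ [(1 − 2√(2X))/3, (1 + 2√(2X))/3]`. -/
theorem admissible_z_small_X (X z : ℝ) (hX0 : 0 ≤ X) (hX1 : X ≤ 1 / 8) :
    (∃ x y : ℝ, 0 ≤ x ∧ 0 ≤ y ∧ x + y + z = 1 ∧
        (x - y) ^ 2 + (y - z) ^ 2 + (z - x) ^ 2 = 4 * X) ↔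
      (1 - 2 * Real.sqrt (2 * X)) / 3 ≤ z ∧ z ≤ (1 + 2 * Real.sqrt (2 * X)) / 3 := by
  rw [exists_nonneg_sum_eq_sum_sq_sub_eq_iff_of_two_mul_le_sq zero_le_one (by linarith)]
  calc (3 * z - 1) ^ 2 ≤ 2 * (4 * X) ↔ ((3 * z - 1) / 2) ^ 2 ≤ 2 * X := by
        constructor <;> intro h <;> linarith
    _ ↔ -√(2 * X) ≤ (3 * z - 1) / 2 ∧ (3 * z - 1) / 2 ≤ √(2 * X) := Real.sq_le (by positivity)
    _ ↔ (1 - 2 * √(2 * X)) / 3 ≤ z ∧ z ≤ (1 + 2 * √(2 * X)) / 3 := by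
        constructor <;> rintro ⟨h₁, h₂⟩ <;> constructor <;> linarith
end
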